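/- arXiv:2406.05585 — 2 statements merged into one kernel-verified Lean document; each statement's English description precedes it below -/
import Mathlib

section
/- Let G be a connected simple graph on a finite nonempty linearly ordered vertex type V with oriented incidence matrix D, and let T be a spanning tree of G. Then the family of fundamental cycles (c_e), indexed by the edges e of G not in T, is a basis of the ℤ-module ker D: every cycle of G can be written uniquely as a ℤ-linear combination of the fundamental cycles. -/
open SimpleGraph Matrix

/-- The oriented incidence matrix of a simple graph on a linearly ordered vertex type:
the column of an edge with endpoints `a < b` has `+1` in row `b`, `-1` in row `a`,
and `0` elsewhere. -/
def orientedIncMat {V : Type*} [LinearOrder V] (G : SimpleGraph V) :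
    Matrix V G.edgeSet ℤ := fun v e =>
  (if v = (e : Sym2 V).sup then 1 else 0) - (if v = (e : Sym2 V).inf then 1 else 0)

/-- The matrix-vector product of the oriented incidence matrix, summed over a vertex set `S`,
is the net flow of the chain into `S`. -/
theorem sum_orientedIncMat_mulVec {V : Type*} [LinearOrder V] (G : SimpleGraph V)
    [Fintype G.edgeSet] (S : Finset V) (z : G.edgeSet → ℤ) :
    ∑ v ∈ S, (orientedIncMat G *ᵥ z) v =
      ∑ e : G.edgeSet, ((if (e : Sym2 V).sup ∈ S then 1 else 0) -
        (if (e : Sym2 V).inf ∈ S then 1 else 0)) * z e := by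
  simp only [mulVec, dotProduct, orientedIncMat]
  rw [Finset.sum_comm]
  simp [← Finset.sum_mul]

/-- A cycle supported on an acyclic graph vanishes. -/
theorem eq_zero_of_orientedIncMat_mulVec_eq_zero {V : Type*} [Fintype V] [LinearOrder V]
    {G T : SimpleGraph V} [Fintype G.edgeSet] (hT : T.IsAcyclic) {z : G.edgeSet → ℤ}
    (hz : orientedIncMat G *ᵥ z = 0)
    (hsupp : ∀ f : G.edgeSet, (f : Sym2 V) ∉ T.edgeSet → z f = 0) : z = 0 := by
  classical
  funext f
  by_cases hf : (f : Sym2 V) ∈ T.edgeSet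
  swap
  · exact hsupp f hf
  obtain ⟨f, hfG⟩ := f
  induction f using Sym2.ind with | _ u v =>
  have hbridge := isAcyclic_iff_forall_isBridge.mp hT hf
  rw [isBridge_iff] at hbridge
  have hcut := sum_orientedIncMat_mulVec G
    {w | (T.deleteEdges {s(u, v)}).Reachable u w} z
  rw [hz, Finset.sum_eq_single_of_mem ⟨s(u, v), hfG⟩ (Finset.mem_univ _)] at hcut
  · rcases le_total u v with h | h <;> simp_all
  · rintro ⟨e, heG⟩ - hne
    by_cases heT : e ∈ T.edgeSet
    swap
    · simp [hsupp ⟨e, heG⟩ heT]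
    induction e using Sym2.ind with | _ x y =>
    have hadj : (T.deleteEdges {s(u, v)}).Adj x y :=
      deleteEdges_adj.mpr ⟨heT, fun h => hne (Subtype.ext h)⟩
    have hiff : (T.deleteEdges {s(u, v)}).Reachable u x ↔
        (T.deleteEdges {s(u, v)}).Reachable u y :=
      ⟨fun h => h.trans hadj.reachable, fun h => h.trans hadj.symm.reachable⟩
    rcases le_total x y with h | h <;> simp [h, hiff]

open scoped Classical in
theorem fundamental_cycles_basis {V : Type*} [Fintype V] [Nonempty V] [LinearOrder V]
    (G T : SimpleGraph V) [DecidableRel G.Adj] (hG : G.Connected)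
    (hTG : T ≤ G) (hT : T.IsTree)
    (c : {e : G.edgeSet // (e : Sym2 V) ∉ T.edgeSet} → G.edgeSet → ℤ)
    (hcycle : ∀ e, orientedIncMat G *ᵥ c e = 0)
    (hone : ∀ e, c e e.1 = 1)
    (hzero : ∀ e (f : G.edgeSet), (f : Sym2 V) ∉ T.edgeSet → f ≠ e.1 → c e f = 0) :
    ∀ z : G.edgeSet → ℤ, orientedIncMat G *ᵥ z = 0 →
      ∃! a : {e : G.edgeSet // (e : Sym2 V) ∉ T.edgeSet} → ℤ, z = ∑ e, a e • c e := by
  intro z hz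
  have hcoeff (a : {e : G.edgeSet // (e : Sym2 V) ∉ T.edgeSet} → ℤ)
      (e : {e : G.edgeSet // (e : Sym2 V) ∉ T.edgeSet}) : (∑ i, a i • c i) e.1 = a e := by
    rw [Finset.sum_apply, Finset.sum_eq_single_of_mem e (Finset.mem_univ _)]
    · simp [hone]
    · intro i _ hi
      simp [hzero i e.1 e.2 (fun h => hi (Subtype.ext h.symm))]
  refine ⟨fun e => z e.1, ?_, fun a ha => funext fun e => by rw [ha, hcoeff]⟩
  refine sub_eq_zero.mp (eq_zero_of_orientedIncMat_mulVec_eq_zero hT.isAcyclic ?_ fun f hf => ?_)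
  · simp only [mulVec_sub, mulVec_sum, mulVec_smul, hz, hcycle, smul_zero, Finset.sum_const_zero,
      sub_zero]
  · rw [Pi.sub_apply, hcoeff _ ⟨f, hf⟩, sub_self]
end

section
/- Let G be a connected simple graph on a finite nonempty linearly ordered vertex type V with oriented incidence matrix D, and let T be a spanning tree of G. Let J be the projection sending an integer 1-chain to its restriction to the edges of G not in T. Then the restriction of J to ker D is a bijection (an isomorphism of ℤ-modules) from the set of cycles of G onto the set of all integer-valued functions on the edges of G not in T. -/
open SimpleGraph Matrix

section

variable {V : Type*} [LinearOrder V]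

theorem vecMul_orientedIncMat [Fintype V] (G : SimpleGraph V) (p : V → ℤ) (e : G.edgeSet) :
    (p ᵥ* orientedIncMat G) e = p (e : Sym2 V).sup - p (e : Sym2 V).inf := by
  simp [vecMul, dotProduct, orientedIncMat, mul_sub, Finset.sum_sub_distrib]

theorem orientedIncMat_col (G : SimpleGraph V) (e : G.edgeSet) :
    (orientedIncMat G).col e =
      Pi.single (e : Sym2 V).sup 1 - Pi.single (e : Sym2 V).inf 1 := by
  ext v
  simp [orientedIncMat, Pi.single_apply]

/-- The `ℤ`-module of 1-chains of `G` supported on the edges of `T`. -/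
def chainsSupportedOn (G T : SimpleGraph V) : Submodule ℤ (G.edgeSet → ℤ) where
  carrier := {c | ∀ e : G.edgeSet, (e : Sym2 V) ∉ T.edgeSet → c e = 0}
  add_mem' ha hb e he := by simp [ha e he, hb e he]
  zero_mem' _ _ := rfl
  smul_mem' n a ha e he := by simp [ha e he]

/-- A cycle of `G` supported on an acyclic graph vanishes. -/
theorem eq_zero_of_mem_chainsSupportedOn [Fintype V] {G T : SimpleGraph V} [DecidableRel G.Adj]
    (hT : T.IsAcyclic) {c : G.edgeSet → ℤ} (hc : c ∈ chainsSupportedOn G T)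
    (h : orientedIncMat G *ᵥ c = 0) : c = 0 := by
  classical
  ext ⟨e, heG⟩
  by_cases heT : e ∈ T.edgeSet
  swap
  · exact hc _ heT
  have hbridge : ¬ (T.deleteEdges {e}).Reachable e.sup e.inf := by
    have hb := SimpleGraph.isAcyclic_iff_forall_isBridge.mp hT heT
    induction e with | _ a b
    rw [SimpleGraph.isBridge_iff] at hb
    rcases le_total a b with hab | hab
    · simpa [hab, SimpleGraph.reachable_comm] using hb
    · simpa [hab] using hb
  -- the indicator of the side of the cut containing the larger endpoint of `e`
  let p : V → ℤ := fun v => if (T.deleteEdges {e}).Reachable e.sup v then 1 else 0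
  have hp : ∀ f ∈ T.edgeSet, f ≠ e → p f.sup = p f.inf := by
    intro f hf hfe
    have hadj : (T.deleteEdges {e}).Reachable f.sup f.inf := by
      induction f with | _ a b
      have hr : (T.deleteEdges {e}).Reachable a b :=
        SimpleGraph.Adj.reachable (SimpleGraph.deleteEdges_adj.mpr ⟨hf, hfe⟩)
      rcases le_total a b with hab | hab
      · simpa [hab] using hr.symm
      · simpa [hab] using hr
    have hiff : (T.deleteEdges {e}).Reachable e.sup f.sup ↔
        (T.deleteEdges {e}).Reachable e.sup f.inf :=
      ⟨fun hr => hr.trans hadj, fun hr => hr.trans hadj.symm⟩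
    simp only [p, hiff]
  have hsum : (p ᵥ* orientedIncMat G) ⬝ᵥ c = 0 := by
    rw [← dotProduct_mulVec, h, dotProduct_zero]
  rw [dotProduct, Finset.sum_eq_single ⟨e, heG⟩] at hsum
  · simpa [vecMul_orientedIncMat, p, hbridge] using hsum
  · rintro ⟨f, hfG⟩ - hfe
    by_cases hf : f ∈ T.edgeSet
    · rw [vecMul_orientedIncMat, hp f hf (fun hh => hfe (Subtype.ext hh)), sub_self, zero_mul]
    · rw [hc _ hf, mul_zero]
  · simp

/-- The boundaries of chains supported on `T` contain the difference of any two vertices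
joined by a walk in `T`. -/
theorem single_sub_single_mem_map_of_walk [Fintype V] {G T : SimpleGraph V} [DecidableRel G.Adj]
    (hTG : T ≤ G) {u v : V} (w : T.Walk u v) :
    (Pi.single u 1 - Pi.single v 1 : V → ℤ) ∈
      (chainsSupportedOn G T).map (orientedIncMat G).mulVecLin := by
  induction w with
  | nil => simp
  | @cons a b d hab _ ih =>
    rw [← sub_add_sub_cancel _ (Pi.single b 1 : V → ℤ)]
    refine add_mem ?_ ih
    have hcol : (orientedIncMat G).col ⟨s(a, b), hTG hab⟩ ∈
        (chainsSupportedOn G T).map (orientedIncMat G).mulVecLin := by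
      refine ⟨Pi.single ⟨s(a, b), hTG hab⟩ 1, fun e he => ?_, by simp⟩
      refine Pi.single_eq_of_ne (fun hh => he ?_) _
      rw [hh]
      exact hab
    rw [orientedIncMat_col] at hcol
    rcases le_total a b with hle | hle
    · rw [← neg_mem_iff]
      simpa [hle] using hcol
    · simpa [hle] using hcol

/-- Every boundary in `G` is the boundary of a chain supported on a connected spanning
subgraph. -/
theorem mulVec_mem_map_chainsSupportedOn [Fintype V] {G T : SimpleGraph V} [DecidableRel G.Adj]
    (hTG : T ≤ G) (hT : T.Preconnected) (c : G.edgeSet → ℤ) :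
    orientedIncMat G *ᵥ c ∈ (chainsSupportedOn G T).map (orientedIncMat G).mulVecLin := by
  rw [mulVec_eq_sum]
  refine sum_mem fun e _ => ?_
  have hcol := single_sub_single_mem_map_of_walk hTG
    (hT (e : Sym2 V).sup (e : Sym2 V).inf).some
  rw [← orientedIncMat_col] at hcol
  rw [op_smul_eq_smul]
  exact Submodule.smul_mem _ (c e) hcol

end

theorem restriction_to_nontree_edges_bijective {V : Type*} [Fintype V] [Nonempty V]
    [LinearOrder V] (G T : SimpleGraph V) [DecidableRel G.Adj] (hG : G.Connected)
    (hTG : T ≤ G) (hT : T.IsTree) :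
    Function.Bijective
      (fun (z : {c : G.edgeSet → ℤ // orientedIncMat G *ᵥ c = 0})
          (e : {e : G.edgeSet // (e : Sym2 V) ∉ T.edgeSet}) => z.1 e.1) := by
  classical
  constructor
  · rintro ⟨c, hc⟩ ⟨d, hd⟩ hcd
    refine Subtype.ext (sub_eq_zero.mp (eq_zero_of_mem_chainsSupportedOn hT.isAcyclic
      (fun e he => sub_eq_zero.mpr (congrFun hcd ⟨e, he⟩)) ?_))
    rw [mulVec_sub, hc, hd, sub_zero]
  · intro f
    let g : G.edgeSet → ℤ := fun e => if he : (e : Sym2 V) ∉ T.edgeSet then f ⟨e, he⟩ else 0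
    obtain ⟨t, ht, htg⟩ := mulVec_mem_map_chainsSupportedOn hTG hT.connected.preconnected g
    refine ⟨⟨g - t, ?_⟩, ?_⟩
    · rw [mulVec_sub, ← htg, mulVecLin_apply, sub_self]
    · ext ⟨e, he⟩
      simp [g, he, ht e he]
end
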